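/- For every element β of the submodule I_n ⊆ Γ_n generated by Arnold combinations, symmetry combinations, and Graphs with doubled edges, and every α ∈ Θ_n, the configuration pairing vanishes: ⟨β, α⟩ = 0. -/

import Mathlib

open scoped Classical

noncomputable section

namespace GTPairing

/-- Planar binary trees with natural-number-labeled leaves.  A `PTree` is a rooted
binary (trivalent) tree embedded in the upper half plane; `node l r` has `l` as its
left branch and `r` as its right branch. -/
inductive PTree : Type
  | leaf (a : ℕ) : PTree
  | node (l r : PTree) : PTree
  deriving DecidableEq

namespace PTree

/-- The labels of the leaves, in planar (left-to-right) order. -/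
def leaves : PTree → List ℕ
  | .leaf a => [a]
  | .node l r => l.leaves ++ r.leaves

/-- The internal (trivalent) vertices of a planar tree, recorded as the subtrees they
support, listed in the left-to-right (in-order) planar order. -/
def nodesList : PTree → List PTree
  | .leaf _ => []
  | .node l r => l.nodesList ++ (PTree.node l r :: r.nodesList)

/-- `nadir t i j` is the nadir (lowest vertex) of the shortest path in `t` between the
leaves labeled `i` and `j`, recorded as the subtree it supports, together with `true`
if the leaf labeled `i` lies over the left branch of the nadir (and `j` over the
right), i.e. if the path travels from left to right at its nadir. -/
def nadir : PTree → ℕ → ℕ → Option (PTree × Bool)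
  | .leaf _, _, _ => none
  | .node l r, i, j =>
    if i ∈ l.leaves ∧ j ∈ r.leaves then some (.node l r, true)
    else if j ∈ l.leaves ∧ i ∈ r.leaves then some (.node l r, false)
    else if i ∈ l.leaves ∧ j ∈ l.leaves then nadir l i j
    else if i ∈ r.leaves ∧ j ∈ r.leaves then nadir r i j
    else none

/-- Fusing: `graft t m s` identifies the root edge of `s` with the leaf edge of `t`
labeled by `m`, i.e. substitutes `s` for the leaf labeled `m`. -/
def graft : PTree → ℕ → PTree → PTree
  | .leaf a, m, s => if a = m then s else .leaf a
  | .node l r, m, s => .node (l.graft m s) (r.graft m s)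

/-- Relabel the leaves of a tree. -/
def relabel (f : ℕ → ℕ) : PTree → PTree
  | .leaf a => .leaf (f a)
  | .node l r => .node (l.relabel f) (r.relabel f)

end PTree

/-- The nadir of the path between the two endpoints of an edge, forgetting planar
direction data. -/
def nadirFst (t : PTree) (e : ℕ × ℕ) : Option PTree := (t.nadir e.1 e.2).map Prod.fst

/-- The (even) configuration pairing between a set of oriented edges `E` (a Graph) and
a planar binary tree `t` (a Tree): it is `0` unless `e ↦ β_{G,T}(e)` (sending an edge
to the nadir of the path between the corresponding leaves) is a bijection from the
edges onto the internal vertices of `t`, in which case it is `(-1)^N` where `N` is the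
number of edges `(i,j)` whose path travels from left to right (`i` over the left
branch) at its nadir. -/
def pairPT (E : Multiset (ℕ × ℕ)) (t : PTree) : ℤ :=
  if E.map (nadirFst t) = ((t.nodesList.map some : List (Option PTree)) : Multiset (Option PTree))
  then (-1) ^ (Multiset.card (E.filter (fun e => (t.nadir e.1 e.2).map Prod.snd = some true)))
  else 0

/-- A Tree with leaves labeled bijectively by the finite set `S`. -/
def IsTreeOn (S : Finset ℕ) (t : PTree) : Prop := t.leaves.Nodup ∧ t.leaves.toFinset = S

def TreeOn (S : Finset ℕ) : Type := {t : PTree // IsTreeOn S t}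

/-- Adjacency relation determined by a multiset of oriented edges. -/
def Adj (E : Multiset (ℕ × ℕ)) (a b : ℕ) : Prop := (a, b) ∈ E ∨ (b, a) ∈ E

/-- Connectivity of an edge multiset on the vertex set `S`. -/
def ConnOn (S : Finset ℕ) (E : Multiset (ℕ × ℕ)) : Prop :=
  ∀ a ∈ S, ∀ b ∈ S, Relation.ReflTransGen (Adj E) a b

/-- A Graph on the vertex set `S`: a connected graph with oriented edges (each edge
joining two distinct vertices of `S`). -/
def IsGraphOn (S : Finset ℕ) (E : Multiset (ℕ × ℕ)) : Prop :=
  (∀ e ∈ E, e.1 ∈ S ∧ e.2 ∈ S ∧ e.1 ≠ e.2) ∧ ConnOn S E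

def GraphOn (S : Finset ℕ) : Type := {E : Multiset (ℕ × ℕ) // IsGraphOn S E}

variable (R : Type) [CommRing R]

/-- `Θ_S`: the free module on Trees with leaves labeled by `S`. -/
abbrev ThetaF (S : Finset ℕ) : Type := TreeOn S →₀ R

/-- `Γ_S`: the free module on Graphs with vertices labeled by `S`. -/
abbrev GammaF (S : Finset ℕ) : Type := GraphOn S →₀ R

variable {R}

/-- The configuration pairing, extended bilinearly to the free modules. -/
def pairGT {S : Finset ℕ} (β : GammaF R S) (α : ThetaF R S) : R :=
  β.sum fun G b => α.sum fun T a => b * a * ((pairPT G.1 T.1 : ℤ) : R)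

/-- The basis element of a free module on a subtype, when the defining property holds
(and `0` otherwise; in all uses below the property does hold). -/
def bsingle {α : Type} (P : α → Prop) (a : α) : ({x : α // P x} →₀ R) :=
  if h : P a then Finsupp.single ⟨a, h⟩ (1 : R) else 0

variable (R)

/-- Jacobi combinations of Trees: the sum of the three Trees obtained from the unique
3-leaf Tree by fusing Trees `A`, `B`, `C` onto its three leaves in the three
cyclically related orders and fusing a Tree `D` onto its root (at the leaf `m` of `D`). -/
def jacobiSet (S : Finset ℕ) : Set (ThetaF R S) :=
  { x | ∃ (D A B C : PTree) (m : ℕ) (T₁ T₂ T₃ : TreeOn S),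
      D.leaves.Nodup ∧ m ∈ D.leaves ∧
      T₁.1 = D.graft m (.node (.node A B) C) ∧
      T₂.1 = D.graft m (.node (.node B C) A) ∧
      T₃.1 = D.graft m (.node (.node C A) B) ∧
      x = Finsupp.single T₁ 1 + Finsupp.single T₂ 1 + Finsupp.single T₃ 1 }

/-- Symmetry combinations of Trees: the sum of two Trees which are isomorphic as
labeled graphs and have the same planar ordering of input edges at every internal
vertex except exactly one (here: exactly the vertex at the leaf `m` of `D`, whose two
branches `A` and `B` are switched). -/
def treeSymmSet (S : Finset ℕ) : Set (ThetaF R S) :=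
  { x | ∃ (D A B : PTree) (m : ℕ) (T₁ T₂ : TreeOn S),
      D.leaves.Nodup ∧ m ∈ D.leaves ∧
      T₁.1 = D.graft m (.node A B) ∧
      T₂.1 = D.graft m (.node B A) ∧
      x = Finsupp.single T₁ 1 + Finsupp.single T₂ 1 }

/-- The submodule `J_S ⊆ Θ_S` generated by Jacobi and symmetry combinations. -/
def Jsub (S : Finset ℕ) : Submodule R (ThetaF R S) :=
  Submodule.span R (jacobiSet R S ∪ treeSymmSet R S)

/-- Arnold combinations of Graphs: sums of three Graphs which agree except on edges
among three fixed distinct vertices `i`, `j`, `k`, where they contain respectively the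
edge pairs `{i→j, j→k}`, `{j→k, k→i}` and `{k→i, i→j}`. -/
def arnoldSet (S : Finset ℕ) : Set (GammaF R S) :=
  { x | ∃ (i j k : ℕ) (E₀ : Multiset (ℕ × ℕ)) (G₁ G₂ G₃ : GraphOn S),
      i ≠ j ∧ j ≠ k ∧ i ≠ k ∧
      G₁.1 = (i, j) ::ₘ (j, k) ::ₘ E₀ ∧
      G₂.1 = (j, k) ::ₘ (k, i) ::ₘ E₀ ∧
      G₃.1 = (k, i) ::ₘ (i, j) ::ₘ E₀ ∧
      x = Finsupp.single G₁ 1 + Finsupp.single G₂ 1 + Finsupp.single G₃ 1 }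

/-- Symmetry combinations of Graphs: sums of two Graphs which differ only in the
orientation of exactly one edge. -/
def graphSymmSet (S : Finset ℕ) : Set (GammaF R S) :=
  { x | ∃ (i j : ℕ) (E₀ : Multiset (ℕ × ℕ)) (G₁ G₂ : GraphOn S),
      G₁.1 = (i, j) ::ₘ E₀ ∧ G₂.1 = (j, i) ::ₘ E₀ ∧
      x = Finsupp.single G₁ 1 + Finsupp.single G₂ 1 }

/-- Graphs having two edges with the same pair of endpoints. -/
def doubledSet (S : Finset ℕ) : Set (GammaF R S) :=
  { x | ∃ (i j : ℕ) (E₀ : Multiset (ℕ × ℕ)) (G : GraphOn S),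
      (G.1 = (i, j) ::ₘ (i, j) ::ₘ E₀ ∨ G.1 = (i, j) ::ₘ (j, i) ::ₘ E₀) ∧
      x = Finsupp.single G 1 }

/-- The submodule `I_S ⊆ Γ_S` generated by Arnold combinations, symmetry combinations
and Graphs with doubled edges. -/
def Isub (S : Finset ℕ) : Submodule R (GammaF R S) :=
  Submodule.span R (arnoldSet R S ∪ graphSymmSet R S ∪ doubledSet R S)

/-- `Lie(S) = Θ_S / J_S`. -/
abbrev LieQ (S : Finset ℕ) : Type := ThetaF R S ⧸ Jsub R S

/-- `Eil(S) = Γ_S / I_S`. -/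
abbrev EilQ (S : Finset ℕ) : Type := GammaF R S ⧸ Isub R S

end GTPairing

namespace GTPairing

/-!
Fix a Tree `T`. An oriented edge enters `⟨G, T⟩` only through its nadir and the direction in which
its path crosses that nadir. Reversing an edge keeps the nadir and reverses the direction, so
symmetry combinations pair to zero. Two edges with a common nadir prevent `β_{G,T}` from being a
bijection, so Graphs with a doubled edge pair to zero. For an Arnold combination on `i, j, k`,
consider the lowest vertex of `T` at which the three leaves do not all lie over the same branch:
one leaf is separated from the other two, and the two edges of the cycle `i → j → k → i` at that
leaf cross this vertex in opposite directions. Hence one of the three Graphs pairs to zero, and the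
other two differ by exchanging these two edges, so their pairings cancel.
-/

namespace PTree

variable {t l r v : PTree} {i j k : ℕ} {p : PTree × Bool}

theorem leaves_ne_nil (t : PTree) : t.leaves ≠ [] := by
  induction t with
  | leaf a => exact List.cons_ne_nil a []
  | node l r hl _ => exact List.append_ne_nil_of_left_ne_nil hl r.leaves

theorem mem_leaves_node : i ∈ (node l r).leaves ↔ i ∈ l.leaves ∨ i ∈ r.leaves :=
  List.mem_append

theorem nodup_leaves_node :
    (node l r).leaves.Nodup ↔
      l.leaves.Nodup ∧ r.leaves.Nodup ∧ l.leaves.Disjoint r.leaves :=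
  List.nodup_append'

theorem leaves_subset_of_mem_nodesList (hv : v ∈ t.nodesList) : v.leaves ⊆ t.leaves := by
  induction t with
  | leaf a => exact absurd hv List.not_mem_nil
  | node l r hl hr =>
    rcases List.mem_append.1 hv with hv | hv
    · exact List.subset_append_of_subset_left _ (hl hv)
    · rcases List.mem_cons.1 hv with rfl | hv
      · exact List.Subset.refl _
      · exact List.subset_append_of_subset_right _ (hr hv)

theorem notMem_nodesList_of_disjoint_leaves (hvt : v.leaves.Disjoint t.leaves) :
    v ∉ t.nodesList := fun hv =>
  have ⟨_, ha⟩ := List.exists_mem_of_ne_nil _ v.leaves_ne_nil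
  hvt ha (leaves_subset_of_mem_nodesList hv ha)

theorem node_notMem_nodesList_left (hlr : l.leaves.Disjoint r.leaves) :
    node l r ∉ l.nodesList := fun h =>
  have ⟨_, ha⟩ := List.exists_mem_of_ne_nil _ r.leaves_ne_nil
  hlr (leaves_subset_of_mem_nodesList h (mem_leaves_node.2 (.inr ha))) ha

theorem node_notMem_nodesList_right (hlr : l.leaves.Disjoint r.leaves) :
    node l r ∉ r.nodesList := fun h =>
  have ⟨_, ha⟩ := List.exists_mem_of_ne_nil _ l.leaves_ne_nil
  hlr ha (leaves_subset_of_mem_nodesList h (mem_leaves_node.2 (.inl ha)))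

theorem nodup_nodesList (ht : t.leaves.Nodup) : t.nodesList.Nodup := by
  induction t with
  | leaf a => exact List.nodup_nil
  | node l r hl hr =>
    obtain ⟨hl', hr', hlr⟩ := nodup_leaves_node.1 ht
    have hdisj : l.nodesList.Disjoint r.nodesList := fun v hvl =>
      notMem_nodesList_of_disjoint_leaves
        (List.disjoint_of_subset_left (leaves_subset_of_mem_nodesList hvl) hlr)
    exact List.nodup_append'.2 ⟨hl hl', (hr hr').cons (node_notMem_nodesList_right hlr),
      List.disjoint_cons_right.2 ⟨node_notMem_nodesList_left hlr, hdisj⟩⟩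

theorem mem_leaves_of_nadir_eq_some (h : t.nadir i j = some p) :
    i ∈ t.leaves ∧ j ∈ t.leaves := by
  induction t with
  | leaf a => exact absurd h (Option.some_ne_none p).symm
  | node l r _ _ =>
    simp only [nadir] at h
    simp only [mem_leaves_node]
    split_ifs at h <;> tauto

theorem nadir_node_of_mem_left_of_mem_right (hi : i ∈ l.leaves) (hj : j ∈ r.leaves) :
    (node l r).nadir i j = some (node l r, true) :=
  if_pos ⟨hi, hj⟩

theorem nadir_node_of_mem_right_of_mem_left (hlr : l.leaves.Disjoint r.leaves)
    (hi : i ∈ r.leaves) (hj : j ∈ l.leaves) :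
    (node l r).nadir i j = some (node l r, false) := by
  have hi' : i ∉ l.leaves := fun h => hlr h hi
  simp only [nadir, hi, hj, hi', false_and, if_false, and_self, if_true]

theorem nadir_node_of_nadir_left (hlr : l.leaves.Disjoint r.leaves)
    (h : l.nadir i j = some p) : (node l r).nadir i j = some p := by
  obtain ⟨hi, hj⟩ := mem_leaves_of_nadir_eq_some h
  have hi' : i ∉ r.leaves := hlr hi
  have hj' : j ∉ r.leaves := hlr hj
  simp only [nadir, hi, hj, hi', hj', and_false, if_false, and_self, if_true, h]

theorem nadir_node_of_nadir_right (hlr : l.leaves.Disjoint r.leaves)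
    (h : r.nadir i j = some p) : (node l r).nadir i j = some p := by
  obtain ⟨hi, hj⟩ := mem_leaves_of_nadir_eq_some h
  have hi' : i ∉ l.leaves := hlr.symm hi
  have hj' : j ∉ l.leaves := hlr.symm hj
  simp only [nadir, hi, hj, hi', hj', false_and, if_false, and_self, if_true, h]

/-- The paths in `t` of the oriented edges `e` and `e'` have the same nadir and cross it in
opposite directions. -/
def Opposed (t : PTree) (e e' : ℕ × ℕ) : Prop :=
  ∃ v b, t.nadir e.1 e.2 = some (v, b) ∧ t.nadir e'.1 e'.2 = some (v, !b)

namespace Opposed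

variable {e e' : ℕ × ℕ}

theorem nadirFst_eq (h : t.Opposed e e') : nadirFst t e = nadirFst t e' := by
  obtain ⟨v, b, he, he'⟩ := h
  simp only [nadirFst, he, he', Option.map_some]

theorem node_left (hlr : l.leaves.Disjoint r.leaves) (h : l.Opposed e e') :
    (node l r).Opposed e e' :=
  have ⟨v, b, he, he'⟩ := h
  ⟨v, b, nadir_node_of_nadir_left hlr he, nadir_node_of_nadir_left hlr he'⟩

theorem node_right (hlr : l.leaves.Disjoint r.leaves) (h : r.Opposed e e') :
    (node l r).Opposed e e' :=
  have ⟨v, b, he, he'⟩ := h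
  ⟨v, b, nadir_node_of_nadir_right hlr he, nadir_node_of_nadir_right hlr he'⟩

end Opposed

theorem opposed_node_left_right_left (hlr : l.leaves.Disjoint r.leaves)
    (hi : i ∈ l.leaves) (hj : j ∈ r.leaves) (hk : k ∈ l.leaves) :
    (node l r).Opposed (i, j) (j, k) :=
  ⟨node l r, true, nadir_node_of_mem_left_of_mem_right hi hj,
    nadir_node_of_mem_right_of_mem_left hlr hj hk⟩

theorem opposed_node_right_left_right (hlr : l.leaves.Disjoint r.leaves)
    (hi : i ∈ r.leaves) (hj : j ∈ l.leaves) (hk : k ∈ r.leaves) :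
    (node l r).Opposed (i, j) (j, k) :=
  ⟨node l r, false, nadir_node_of_mem_right_of_mem_left hlr hi hj,
    nadir_node_of_mem_left_of_mem_right hj hk⟩

theorem opposed_swap (ht : t.leaves.Nodup) (hij : i ≠ j) (hi : i ∈ t.leaves)
    (hj : j ∈ t.leaves) : t.Opposed (i, j) (j, i) := by
  induction t with
  | leaf a => exact absurd ((List.mem_singleton.1 hi).trans (List.mem_singleton.1 hj).symm) hij
  | node l r hl hr =>
    obtain ⟨hl', hr', hlr⟩ := nodup_leaves_node.1 ht
    rcases mem_leaves_node.1 hi with hi | hi <;> rcases mem_leaves_node.1 hj with hj | hj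
    · exact (hl hl' hi hj).node_left hlr
    · exact opposed_node_left_right_left hlr hi hj hi
    · exact opposed_node_right_left_right hlr hi hj hi
    · exact (hr hr' hi hj).node_right hlr

theorem opposed_of_cycle (ht : t.leaves.Nodup) (hij : i ≠ j) (hi : i ∈ t.leaves)
    (hj : j ∈ t.leaves) (hk : k ∈ t.leaves) :
    t.Opposed (i, j) (j, k) ∨ t.Opposed (j, k) (k, i) ∨ t.Opposed (k, i) (i, j) := by
  induction t with
  | leaf a => exact absurd ((List.mem_singleton.1 hi).trans (List.mem_singleton.1 hj).symm) hij
  | node l r hl hr =>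
    obtain ⟨hl', hr', hlr⟩ := nodup_leaves_node.1 ht
    rcases mem_leaves_node.1 hi with hi | hi <;> rcases mem_leaves_node.1 hj with hj | hj <;>
      rcases mem_leaves_node.1 hk with hk | hk
    · exact (hl hl' hi hj hk).imp (.node_left hlr) (.imp (.node_left hlr) (.node_left hlr))
    · exact .inr (.inl (opposed_node_left_right_left hlr hj hk hi))
    · exact .inl (opposed_node_left_right_left hlr hi hj hk)
    · exact .inr (.inr (opposed_node_right_left_right hlr hk hi hj))
    · exact .inr (.inr (opposed_node_left_right_left hlr hk hi hj))
    · exact .inl (opposed_node_right_left_right hlr hi hj hk)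
    · exact .inr (.inl (opposed_node_right_left_right hlr hj hk hi))
    · exact (hr hr' hi hj hk).imp (.node_right hlr) (.imp (.node_right hlr) (.node_right hlr))

end PTree

section TreePairing

variable {t : PTree} {e e' : ℕ × ℕ} {i j k : ℕ}

theorem pairPT_cons_eq_neg_of_opposed (h : t.Opposed e e') (E : Multiset (ℕ × ℕ)) :
    pairPT (e' ::ₘ E) t = -pairPT (e ::ₘ E) t := by
  obtain ⟨v, b, he, he'⟩ := id h
  simp only [pairPT, Multiset.map_cons, h.nadirFst_eq]
  split_ifs
  · cases b <;> simp [he, he', pow_add]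
  · exact neg_zero.symm

theorem pairPT_cons_cons_eq_zero_of_nadirFst_eq (ht : t.leaves.Nodup)
    (h : nadirFst t e = nadirFst t e') (E : Multiset (ℕ × ℕ)) :
    pairPT (e ::ₘ e' ::ₘ E) t = 0 := by
  refine if_neg fun hbij => ?_
  have hnodup : ((e ::ₘ e' ::ₘ E).map (nadirFst t)).Nodup := by
    rw [hbij, Multiset.coe_nodup]
    exact (PTree.nodup_nodesList ht).map (Option.some_injective _)
  rw [Multiset.map_cons, Multiset.map_cons, h] at hnodup
  exact (Multiset.nodup_cons.1 hnodup).1 (Multiset.mem_cons_self _ _)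

theorem pairPT_add_add_eq_zero_of_opposed (ht : t.leaves.Nodup) (h : t.Opposed e e')
    (e'' : ℕ × ℕ) (E : Multiset (ℕ × ℕ)) :
    pairPT (e ::ₘ e' ::ₘ E) t + pairPT (e' ::ₘ e'' ::ₘ E) t + pairPT (e'' ::ₘ e ::ₘ E) t = 0 := by
  rw [pairPT_cons_cons_eq_zero_of_nadirFst_eq ht h.nadirFst_eq, zero_add,
    Multiset.cons_swap e'' e, pairPT_cons_eq_neg_of_opposed h, neg_add_cancel]

theorem pairPT_arnold (ht : t.leaves.Nodup) (hij : i ≠ j) (hi : i ∈ t.leaves)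
    (hj : j ∈ t.leaves) (hk : k ∈ t.leaves) (E : Multiset (ℕ × ℕ)) :
    pairPT ((i, j) ::ₘ (j, k) ::ₘ E) t + pairPT ((j, k) ::ₘ (k, i) ::ₘ E) t +
      pairPT ((k, i) ::ₘ (i, j) ::ₘ E) t = 0 := by
  rcases PTree.opposed_of_cycle ht hij hi hj hk with h | h | h
  · exact pairPT_add_add_eq_zero_of_opposed ht h (k, i) E
  · rw [add_rotate]
    exact pairPT_add_add_eq_zero_of_opposed ht h (i, j) E
  · rw [← add_rotate]
    exact pairPT_add_add_eq_zero_of_opposed ht h (j, k) E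

end TreePairing

section LinearPairing

variable {R : Type} [CommRing R] {S : Finset ℕ} {β : GammaF R S}

theorem TreeOn.mem_leaves (T : TreeOn S) {a : ℕ} (ha : a ∈ S) : a ∈ T.1.leaves :=
  List.mem_toFinset.1 (T.2.2.symm.subset ha)

theorem TreeOn.opposed_swap (T : TreeOn S) {G : GraphOn S} {i j : ℕ} (h : (i, j) ∈ G.1) :
    T.1.Opposed (i, j) (j, i) :=
  have ⟨hi, hj, hij⟩ := G.2.1 _ h
  PTree.opposed_swap T.2.1 hij (T.mem_leaves hi) (T.mem_leaves hj)

/-- The configuration pairing with a fixed Tree, as a linear functional on `Γ_S`. -/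
def pairTree (T : TreeOn S) : GammaF R S →ₗ[R] R :=
  Finsupp.linearCombination R fun G => (pairPT G.1 T.1 : R)

theorem pairTree_single_one (T : TreeOn S) (G : GraphOn S) :
    pairTree T (Finsupp.single G (1 : R)) = (pairPT G.1 T.1 : R) := by
  rw [pairTree, Finsupp.linearCombination_single, one_smul]

theorem pairGT_eq_sum_pairTree (β : GammaF R S) (α : ThetaF R S) :
    pairGT β α = α.sum fun T a => a * pairTree T β := by
  simp only [pairGT, pairTree, Finsupp.linearCombination_apply, Finsupp.mul_sum, smul_eq_mul]
  rw [Finsupp.sum_comm]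
  simp only [mul_assoc, mul_left_comm]

theorem pairTree_eq_zero_of_mem_arnoldSet (T : TreeOn S) (hβ : β ∈ arnoldSet R S) :
    pairTree T β = 0 := by
  obtain ⟨i, j, k, E, G₁, G₂, G₃, hij, -, -, hG₁, hG₂, hG₃, rfl⟩ := hβ
  obtain ⟨hi, hj, -⟩ := G₁.2.1 (i, j) (by simp [hG₁])
  obtain ⟨-, hk, -⟩ := G₁.2.1 (j, k) (by simp [hG₁])
  simp only [map_add, pairTree_single_one, hG₁, hG₂, hG₃]
  exact_mod_cast congrArg (Int.cast : ℤ → R)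
    (pairPT_arnold T.2.1 hij (T.mem_leaves hi) (T.mem_leaves hj) (T.mem_leaves hk) E)

theorem pairTree_eq_zero_of_mem_graphSymmSet (T : TreeOn S) (hβ : β ∈ graphSymmSet R S) :
    pairTree T β = 0 := by
  obtain ⟨i, j, E, G₁, G₂, hG₁, hG₂, rfl⟩ := hβ
  have hswap : T.1.Opposed (i, j) (j, i) := T.opposed_swap (G := G₁) (by simp [hG₁])
  rw [map_add, pairTree_single_one, pairTree_single_one, hG₁, hG₂,
    pairPT_cons_eq_neg_of_opposed hswap, Int.cast_neg, add_neg_cancel]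

theorem pairTree_eq_zero_of_mem_doubledSet (T : TreeOn S) (hβ : β ∈ doubledSet R S) :
    pairTree T β = 0 := by
  obtain ⟨i, j, E, G, hG, rfl⟩ := hβ
  have hswap : T.1.Opposed (i, j) (j, i) :=
    T.opposed_swap (G := G) (by rcases hG with hG | hG <;> simp [hG])
  have hpair : pairPT G.1 T.1 = 0 := by
    rcases hG with hG | hG <;> rw [hG]
    · exact pairPT_cons_cons_eq_zero_of_nadirFst_eq T.2.1 rfl E
    · exact pairPT_cons_cons_eq_zero_of_nadirFst_eq T.2.1 hswap.nadirFst_eq E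
  rw [pairTree_single_one, hpair, Int.cast_zero]

theorem Isub_le_ker_pairTree (T : TreeOn S) : Isub R S ≤ LinearMap.ker (pairTree T) := by
  refine Submodule.span_le.2 ?_
  rintro β ((hβ | hβ) | hβ)
  · exact pairTree_eq_zero_of_mem_arnoldSet T hβ
  · exact pairTree_eq_zero_of_mem_graphSymmSet T hβ
  · exact pairTree_eq_zero_of_mem_doubledSet T hβ

theorem pairing_vanishes_on_I_general (hβ : β ∈ Isub R S) (α : ThetaF R S) :
    pairGT β α = 0 := by
  rw [pairGT_eq_sum_pairTree]
  exact Finset.sum_eq_zero fun T _ =>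
    mul_eq_zero_of_right (α T) (LinearMap.mem_ker.1 (Isub_le_ker_pairTree T hβ))

end LinearPairing

/-- the configuration pairing vanishes on the submodule `I_n ⊆ Γ_n`
generated by Arnold combinations, symmetry combinations, and Graphs with doubled
edges. -/
theorem pairing_vanishes_on_I (R : Type) [CommRing R] (n : ℕ)
    (β : GammaF R (Finset.range n)) (hβ : β ∈ Isub R (Finset.range n))
    (α : ThetaF R (Finset.range n)) :
    pairGT β α = 0 :=
  pairing_vanishes_on_I_general hβ α

end GTPairing
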